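/- Let ζ, γ ∈ 𝒫₁(B) on a separable Banach space B. Then ζ ≤_cx γ and ζ is finitely supported if and only if there exist a probability π on B × B with second marginal γ and a finite Borel partition (P_i) of B such that ζ = Σ_{i : π(P_i × B)>0} π(P_i × B) · δ_{y_i}, where y_i := (1/π(P_i × B)) ∫_{P_i × B} y dπ(x,y). -/

import Mathlib

open MeasureTheory
open scoped NNReal ENNReal

/-- The image of a closed bounded convex subset of a Hilbert space under a continuous linear map
is closed. -/
theorem Convex.isClosed_image_of_isBounded {H F : Type*} [NormedAddCommGroup H]
    [InnerProductSpace ℝ H] [CompleteSpace H] [NormedAddCommGroup F] [NormedSpace ℝ F]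
    {K : Set H} (hK : Convex ℝ K) (hclosed : IsClosed K) (hbdd : Bornology.IsBounded K)
    (T : H →L[ℝ] F) : IsClosed (T '' K) := by
  refine isClosed_of_closure_subset fun b hb ↦ ?_
  let C : ℕ → Set H := fun n ↦ K ∩ T ⁻¹' Metric.closedBall b (1 / ((n : ℝ) + 1))
  have hC_closed (n : ℕ) : IsClosed (C n) :=
    hclosed.inter (Metric.isClosed_closedBall.preimage T.continuous)
  have hC_convex (n : ℕ) : Convex ℝ (C n) :=
    hK.inter ((convex_closedBall b _).linear_preimage T.toLinearMap)
  have hC_anti {n m : ℕ} (hnm : n ≤ m) : C m ⊆ C n := fun w hw ↦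
    ⟨hw.1, Metric.closedBall_subset_closedBall (Nat.one_div_le_one_div hnm) hw.2⟩
  have hC_nonempty (n : ℕ) : (C n).Nonempty := by
    obtain ⟨_, ⟨w, hw, rfl⟩, hdist⟩ :=
      Metric.mem_closure_iff.1 hb (1 / ((n : ℝ) + 1)) Nat.one_div_pos_of_nat
    exact ⟨w, hw, by simpa [dist_comm] using hdist.le⟩
  have hmin (n : ℕ) : ∃ v ∈ C n, ∀ w ∈ C n, ‖v‖ ≤ ‖w‖ := by
    obtain ⟨v, hv, hnorm⟩ := exists_norm_eq_iInf_of_complete_convex (hC_nonempty n)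
      (hC_closed n).isComplete (hC_convex n) 0
    refine ⟨v, hv, fun w hw ↦ ?_⟩
    simp only [zero_sub, norm_neg] at hnorm
    rw [hnorm]
    exact ciInf_le ⟨0, by rintro _ ⟨u, rfl⟩; positivity⟩ (⟨w, hw⟩ : C n)
  choose v hvC hv using hmin
  have hmono : Monotone fun n ↦ ‖v n‖ ^ 2 := fun n m hnm ↦
    pow_le_pow_left₀ (norm_nonneg _) (hv n _ (hC_anti hnm (hvC m))) 2
  obtain ⟨M, hM⟩ := hbdd.exists_norm_le
  have hbound : BddAbove (Set.range fun n ↦ ‖v n‖ ^ 2) :=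
    ⟨M ^ 2, by rintro _ ⟨n, rfl⟩; exact pow_le_pow_left₀ (norm_nonneg _) (hM _ (hvC n).1) 2⟩
  have hdiff {n m : ℕ} (hnm : n ≤ m) : ‖v m - v n‖ ^ 2 ≤ 2 * (‖v m‖ ^ 2 - ‖v n‖ ^ 2) := by
    have hmid : (1 / 2 : ℝ) • v m + (1 / 2 : ℝ) • v n ∈ C n :=
      hC_convex n (hC_anti hnm (hvC m)) (hvC n) (by norm_num) (by norm_num) (by norm_num)
    have hle := hv n _ hmid
    rw [← smul_add, norm_smul, Real.norm_of_nonneg (by norm_num)] at hle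
    have hlaw := parallelogram_law_with_norm ℝ (v m) (v n)
    nlinarith [norm_nonneg (v n), norm_nonneg (v m + v n)]
  have hcauchy : CauchySeq v := by
    refine Metric.cauchySeq_iff'.2 fun ε hε ↦ ?_
    obtain ⟨N, hN⟩ := ((tendsto_atTop_ciSup hmono hbound).eventually
      (lt_mem_nhds (show (⨆ n, ‖v n‖ ^ 2) - ε ^ 2 / 2 < ⨆ n, ‖v n‖ ^ 2 by
        have := pow_pos hε 2; linarith))).exists
    refine ⟨N, fun n hn ↦ ?_⟩
    rw [dist_eq_norm]
    refine lt_of_pow_lt_pow_left₀ 2 hε.le ?_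
    have hsup := le_ciSup hbound n
    have := hdiff hn
    linarith
  obtain ⟨u, hu⟩ := cauchySeq_tendsto_of_complete hcauchy
  have huC (n : ℕ) : u ∈ C n :=
    (hC_closed n).mem_of_tendsto hu
      (Filter.eventually_atTop.2 ⟨n, fun m hm ↦ hC_anti hm (hvC m)⟩)
  refine ⟨u, (huC 0).1, dist_le_zero.1 ?_⟩
  exact ge_of_tendsto' tendsto_one_div_add_atTop_nhds_zero_nat fun n ↦ (huC n).2

section

variable {α : Type*} [MeasurableSpace α] (ν : Measure α) [IsFiniteMeasure ν] (n : ℕ)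

/-- The `n`-tuples of square-integrable functions which form a partition of unity. -/
def lpPartitionsOfUnity : Set (PiLp 2 fun _ : Fin n ↦ Lp ℝ 2 ν) :=
  {φ | (∀ i, 0 ≤ φ i) ∧ ∑ i, φ i = Lp.const 2 ν 1}

theorem isClosed_lpPartitionsOfUnity : IsClosed (lpPartitionsOfUnity ν n) := by
  have heq : lpPartitionsOfUnity ν n =
      (⋂ i, {φ | 0 ≤ φ i}) ∩ {φ | ∑ i, φ i = Lp.const 2 ν 1} := by
    ext φ
    simp [lpPartitionsOfUnity]
  rw [heq]
  refine IsClosed.inter ?_ ?_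
  · exact isClosed_iInter fun i ↦ isClosed_le continuous_const
      (PiLp.proj (𝕜 := ℝ) 2 (fun _ : Fin n ↦ Lp ℝ 2 ν) i).continuous
  · exact isClosed_eq (continuous_finsetSum _ fun i _ ↦
      (PiLp.proj (𝕜 := ℝ) 2 (fun _ : Fin n ↦ Lp ℝ 2 ν) i).continuous) continuous_const

theorem convex_lpPartitionsOfUnity : Convex ℝ (lpPartitionsOfUnity ν n) := by
  have hsmul {c : ℝ} (hc : 0 ≤ c) {f : Lp ℝ 2 ν} (hf : 0 ≤ f) : 0 ≤ c • f := by
    rw [← Lp.coeFn_nonneg] at hf ⊢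
    filter_upwards [hf, Lp.coeFn_smul c f] with y hy hsmul
    simpa [hsmul] using mul_nonneg hc hy
  rintro φ ⟨hφ, hφ_sum⟩ ψ ⟨hψ, hψ_sum⟩ a b ha hb hab
  refine ⟨fun i ↦ add_nonneg (hsmul ha (hφ i)) (hsmul hb (hψ i)), ?_⟩
  simp only [PiLp.add_apply, PiLp.smul_apply, Finset.sum_add_distrib, ← Finset.smul_sum, hφ_sum,
    hψ_sum, ← add_smul, hab, one_smul]

theorem isBounded_lpPartitionsOfUnity : Bornology.IsBounded (lpPartitionsOfUnity ν n) := by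
  refine isBounded_iff_forall_norm_le.2
    ⟨√(∑ _i : Fin n, ‖(Lp.const 2 ν 1 : Lp ℝ 2 ν)‖ ^ 2), fun φ hφ ↦ ?_⟩
  refine Real.le_sqrt_of_sq_le ?_
  rw [PiLp.norm_sq_eq_of_L2]
  gcongr with i
  have hle : φ i ≤ Lp.const 2 ν 1 := by
    rw [← hφ.2]
    exact Finset.single_le_sum (fun j _ ↦ hφ.1 j) (Finset.mem_univ i)
  refine norm_le_norm_of_abs_le_abs ?_
  rwa [abs_of_nonneg (hφ.1 i), abs_of_nonneg ((hφ.1 i).trans hle)]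

end

theorem exists_measurable_partition_eq_sup' {α : Type*} [MeasurableSpace α] {n : ℕ} [NeZero n]
    {f : Fin n → α → ℝ} (hf : ∀ i, Measurable (f i)) :
    ∃ A : Fin n → Set α, (∀ i, MeasurableSet (A i)) ∧ Pairwise (Function.onFun Disjoint A) ∧
      ⋃ i, A i = Set.univ ∧
      ∀ i, ∀ y ∈ A i, f i y = Finset.univ.sup' Finset.univ_nonempty fun j ↦ f j y := by
  let D : Fin n → Set α := fun i ↦
    {y | f i y = Finset.univ.sup' Finset.univ_nonempty fun j ↦ f j y}
  have hD (i : Fin n) : MeasurableSet (D i) :=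
    measurableSet_eq_fun (hf i) (by
      have := Finset.measurable_sup' (s := Finset.univ) (Finset.univ_nonempty (α := Fin n))
        fun i _ ↦ hf i
      convert this using 2
      simp)
  refine ⟨disjointed D, fun i ↦ ?_, disjoint_disjointed D, ?_, fun i y hy ↦
    disjointed_subset D i hy⟩
  · rw [disjointed_apply, Finset.sup_set_eq_biUnion]
    exact (hD i).diff (Finset.measurableSet_biUnion _ fun j _ ↦ hD j)
  · rw [iUnion_disjointed]
    refine Set.eq_univ_of_forall fun y ↦ Set.mem_iUnion.2 ?_
    obtain ⟨i, -, hi⟩ := Finset.exists_mem_eq_sup' Finset.univ_nonempty fun j ↦ f j y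
    exact ⟨i, hi.symm⟩

theorem lipschitzWith_sup'_univ {α : Type*} [PseudoMetricSpace α] {n : ℕ} [NeZero n]
    {f : Fin n → α → ℝ} {K : Fin n → ℝ≥0} (hf : ∀ i, LipschitzWith (K i) (f i)) :
    LipschitzWith (∑ i, K i) fun y ↦ Finset.univ.sup' Finset.univ_nonempty fun i ↦ f i y := by
  refine LipschitzWith.of_le_add_mul _ fun x y ↦ Finset.sup'_le _ _ fun i _ ↦ ?_
  calc f i x ≤ f i y + K i * dist x y := (hf i).le_add_mul x y
    _ ≤ _ := by
      gcongr
      · exact Finset.le_sup' (fun j ↦ f j y) (Finset.mem_univ i)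
      · exact Finset.single_le_sum (fun j _ ↦ zero_le (a := K j)) (Finset.mem_univ i)

theorem convexOn_sup'_univ {E : Type*} [AddCommGroup E] [Module ℝ E] {n : ℕ} [NeZero n]
    {f : Fin n → E → ℝ} (hf : ∀ i, ConvexOn ℝ Set.univ (f i)) :
    ConvexOn ℝ Set.univ fun y ↦ Finset.univ.sup' Finset.univ_nonempty fun i ↦ f i y := by
  refine ⟨convex_univ, fun x _ y _ a b ha hb hab ↦ Finset.sup'_le _ _ fun i _ ↦ ?_⟩
  calc f i (a • x + b • y) ≤ a • f i x + b • f i y :=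
        (hf i).2 (Set.mem_univ x) (Set.mem_univ y) ha hb hab
    _ ≤ _ := by
      gcongr
      · exact Finset.le_sup' (fun j ↦ f j x) (Finset.mem_univ i)
      · exact Finset.le_sup' (fun j ↦ f j y) (Finset.mem_univ i)

theorem LipschitzWith.integrable_of_integrable_id {E : Type*} [NormedAddCommGroup E]
    [MeasurableSpace E] [BorelSpace E] [SecondCountableTopology E] {γ : Measure E}
    [IsFiniteMeasure γ] (hγ : Integrable (fun y ↦ y) γ) {f : E → ℝ} {K : ℝ≥0}
    (hf : LipschitzWith K f) : Integrable f γ := by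
  refine Integrable.mono' ((hγ.norm.const_mul K).add (integrable_const ‖f 0‖))
    hf.continuous.aestronglyMeasurable (Filter.Eventually.of_forall fun y ↦ ?_)
  have := hf.norm_sub_le y 0
  have := norm_sub_norm_le (f y) (f 0)
  simp only [Pi.add_apply]
  rw [sub_zero] at *
  linarith

theorem exists_injective_eq_sum_smul_dirac {α : Type*} [MeasurableSpace α]
    [MeasurableSingletonClass α] (ζ : Measure α) {s : Finset α} (hs : ζ (↑s)ᶜ = 0) :
    ∃ x : Fin s.card → α, Function.Injective x ∧ ζ = ∑ i, ζ {x i} • Measure.dirac (x i) := by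
  classical
  refine ⟨fun i ↦ s.equivFin.symm i,
    Subtype.val_injective.comp s.equivFin.symm.injective, ?_⟩
  rw [Equiv.sum_comp s.equivFin.symm fun b : s ↦ ζ {(b : α)} • Measure.dirac (b : α),
    Finset.sum_coe_sort s fun b ↦ ζ {b} • Measure.dirac b]
  ext A hA
  have hfilter : A ∩ ↑s = (↑(s.filter (· ∈ A)) : Set α) := by
    ext b
    simp [and_comm]
  rw [← measure_inter_conull hs, hfilter, ← sum_measure_singleton, Finset.sum_filter]
  simp [hA, Set.indicator_apply]

section

variable {B : Type*} [NormedAddCommGroup B] [NormedSpace ℝ B] [CompleteSpace B]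
  [MeasurableSpace B] [BorelSpace B] [SecondCountableTopology B]

/-- If `γ` has a finite first moment, then `f ↦ ∫ y, f y • (1, y) ∂γ` is a continuous linear map on
the `L²` space of a suitable finite measure dominating `γ`. -/
theorem exists_clm_eq_integral_smul_one_prod (γ : Measure B) [IsProbabilityMeasure γ]
    (hγ : Integrable (fun y ↦ y) γ) :
    ∃ ν : Measure B, IsFiniteMeasure ν ∧ γ ≪ ν ∧ ∃ S : Lp ℝ 2 ν →L[ℝ] ℝ × B,
      ∀ f : Lp ℝ 2 ν, S f = ∫ y, f y • ((1 : ℝ), y) ∂γ := by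
  let w : B → ℝ≥0 := fun y ↦ 1 + ‖y‖₊
  have hw : Measurable w := by fun_prop
  have hw_pos (y : B) : 0 < w y := by positivity
  let ν := γ.withDensity fun y ↦ (w y : ℝ≥0∞)
  have hν : IsFiniteMeasure ν := by
    refine isFiniteMeasure_withDensity ?_
    have := hγ.2
    simp only [HasFiniteIntegral] at this
    simp only [w, ENNReal.coe_add, ENNReal.coe_one]
    rw [lintegral_add_left measurable_const]
    simpa [← enorm_eq_nnnorm] using this.ne
  let g : B → ℝ × B := fun y ↦ (w y)⁻¹ • ((1 : ℝ), y)
  have hg : MemLp g 2 ν := by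
    refine MemLp.of_bound (Measurable.aestronglyMeasurable (by fun_prop)) 1
      (Filter.Eventually.of_forall fun y ↦ ?_)
    have hnorm : ‖((1 : ℝ), y)‖ ≤ w y := by
      simp [w, Prod.norm_def]
    rw [show g y = ((w y)⁻¹ : ℝ) • ((1 : ℝ), y) from rfl, norm_smul, norm_inv,
      Real.norm_of_nonneg (by positivity)]
    exact inv_mul_le_one_of_le₀ hnorm (by positivity)
  refine ⟨ν, hν, withDensity_absolutelyContinuous' (by fun_prop)
      (Filter.Eventually.of_forall fun y ↦ by simpa using (hw_pos y).ne'),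
    ((ContinuousLinearMap.lsmul ℝ ℝ).lpPairing ν 2 2).flip hg.toLp, fun f ↦ ?_⟩
  rw [ContinuousLinearMap.flip_apply, ContinuousLinearMap.lpPairing_eq_integral]
  calc ∫ y, f y • hg.toLp g y ∂ν = ∫ y, f y • g y ∂ν := by
        refine integral_congr_ae ?_
        filter_upwards [hg.coeFn_toLp] with y hy
        rw [hy]
    _ = ∫ y, w y • f y • g y ∂γ := integral_withDensity_eq_integral_smul hw _
    _ = ∫ y, f y • ((1 : ℝ), y) ∂γ := by
        congr 1 with y : 1
        have := hw_pos y
        rw [smul_comm, smul_inv_smul₀ (by positivity)]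

/-- The theorem of Strassen for finitely supported measures: if `∑ p i • δ (x i)` is below `γ`
in the convex order, then `γ` splits into densities with masses `p i` and barycentres `x i`. -/
theorem exists_densities_of_forall_convex_le (γ : Measure B) [IsProbabilityMeasure γ]
    (hγ : Integrable (fun y ↦ y) γ) {n : ℕ} [NeZero n] (x : Fin n → B) (p : Fin n → ℝ)
    (hp : ∀ i, 0 ≤ p i)
    (hcx : ∀ f : B → ℝ, (∃ K, LipschitzWith K f) → ConvexOn ℝ Set.univ f →
      ∑ i, p i * f (x i) ≤ ∫ y, f y ∂γ) :
    ∃ φ : Fin n → B → ℝ, (∀ i, Measurable (φ i)) ∧ (∀ i, 0 ≤ᵐ[γ] φ i) ∧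
      (∀ᵐ y ∂γ, ∑ i, φ i y = 1) ∧
      ∀ i, ∫ y, φ i y • ((1 : ℝ), y) ∂γ = p i • ((1 : ℝ), x i) := by
  obtain ⟨ν, hν, hγν, S, hS⟩ := exists_clm_eq_integral_smul_one_prod γ hγ
  let T : (PiLp 2 fun _ : Fin n ↦ Lp ℝ 2 ν) →L[ℝ] (Fin n → ℝ × B) :=
    ContinuousLinearMap.pi fun i ↦ S ∘L PiLp.proj 2 _ i
  have hT (φ : PiLp 2 fun _ : Fin n ↦ Lp ℝ 2 ν) (i : Fin n) :
      T φ i = ∫ y, φ i y • ((1 : ℝ), y) ∂γ := hS (φ i)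
  let t : Fin n → ℝ × B := fun i ↦ p i • ((1 : ℝ), x i)
  have hmem : t ∈ T '' lpPartitionsOfUnity ν n := by
    by_contra hnot
    obtain ⟨L, u, hLu, hut⟩ := geometric_hahn_banach_closed_point
      ((convex_lpPartitionsOfUnity ν n).linear_image T.toLinearMap)
      ((convex_lpPartitionsOfUnity ν n).isClosed_image_of_isBounded
        (isClosed_lpPartitionsOfUnity ν n) (isBounded_lpPartitionsOfUnity ν n) T) hnot
    let l : Fin n → (ℝ × B →L[ℝ] ℝ) := fun i ↦ L ∘L ContinuousLinearMap.single ℝ (fun _ ↦ ℝ × B) i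
    have hL (v : Fin n → ℝ × B) : L v = ∑ i, l i (v i) := by
      conv_lhs => rw [← Finset.univ_sum_single v, map_sum]
      rfl
    let f : Fin n → B → ℝ := fun i y ↦ l i (1, y)
    let h : B → ℝ := fun y ↦ Finset.univ.sup' Finset.univ_nonempty fun i ↦ f i y
    have hf_lip (i : Fin n) : LipschitzWith ‖l i‖₊ (f i) := by
      have hcomp := (l i).lipschitz.comp (LipschitzWith.prodMk_left (α := ℝ) (β := B) 1)
      rwa [mul_one] at hcomp
    have hf_convex (i : Fin n) : ConvexOn ℝ Set.univ (f i) := by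
      refine ⟨convex_univ, fun y _ z _ a b _ _ hab ↦ le_of_eq ?_⟩
      simp only [f, ← map_smul, ← map_add]
      congr 1
      simp [hab]
    have hh_lip := lipschitzWith_sup'_univ hf_lip
    obtain ⟨A, hA, hA_disj, hA_univ, hAf⟩ :=
      exists_measurable_partition_eq_sup' fun i ↦ (hf_lip i).continuous.measurable
    let φ : PiLp 2 fun _ : Fin n ↦ Lp ℝ 2 ν :=
      WithLp.toLp 2 fun i ↦ indicatorConstLp 2 (hA i) (measure_ne_top ν _) (1 : ℝ)
    have hφ_coe (i : Fin n) : φ i =ᵐ[ν] (A i).indicator fun _ ↦ 1 :=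
      indicatorConstLp_coeFn (hs := hA i) (hμs := measure_ne_top ν _)
    have hφ : φ ∈ lpPartitionsOfUnity ν n := by
      refine ⟨fun i ↦ ?_, Lp.ext ?_⟩
      · rw [← Lp.coeFn_nonneg]
        filter_upwards [hφ_coe i] with y hy
        rw [hy]
        exact Set.indicator_nonneg (fun _ _ ↦ zero_le_one) y
      · filter_upwards [Lp.coeFn_finsetSum Finset.univ fun i ↦ φ i, ae_all_iff.2 hφ_coe,
          Lp.coeFn_const (p := 2) (μ := ν) (c := (1 : ℝ))] with y hsum hy hconst
        rw [hsum, hconst, Finset.sum_apply]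
        simp only [hy, Function.const_apply]
        obtain ⟨i, hi⟩ := Set.mem_iUnion.1 (hA_univ ▸ Set.mem_univ y : y ∈ ⋃ i, A i)
        rw [Finset.sum_eq_single i _ (by simp), Set.indicator_of_mem hi]
        exact fun j _ hji ↦ Set.indicator_of_notMem
          (fun hj ↦ Set.disjoint_left.1 (hA_disj hji) hj hi) _
    have hint_one : Integrable (fun y : B ↦ ((1 : ℝ), y)) γ := (integrable_const 1).prodMk hγ
    have hh_int : Integrable h γ := hh_lip.integrable_of_integrable_id hγ
    have hTφ : L (T φ) = ∫ y, h y ∂γ := by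
      rw [hL, ← setIntegral_univ (f := h), ← hA_univ,
        integral_iUnion_fintype hA hA_disj fun i ↦ hh_int.integrableOn]
      refine Finset.sum_congr rfl fun i _ ↦ ?_
      have : T φ i = ∫ y in A i, ((1 : ℝ), y) ∂γ := by
        rw [hT, ← integral_indicator (hA i)]
        refine integral_congr_ae ?_
        filter_upwards [hγν.ae_le (hφ_coe i)] with y hy
        rw [hy]
        by_cases hyA : y ∈ A i <;> simp [hyA]
      rw [this, ← (l i).integral_comp_comm hint_one.integrableOn]
      exact setIntegral_congr_fun (hA i) (hAf i)
    have hLt : L t ≤ ∑ i, p i * h (x i) := by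
      rw [hL]
      refine Finset.sum_le_sum fun i _ ↦ ?_
      simp only [t, map_smul, smul_eq_mul]
      exact mul_le_mul_of_nonneg_left
        (Finset.le_sup' (fun j ↦ f j (x i)) (Finset.mem_univ i)) (hp i)
    have : L (T φ) < u := hLu _ ⟨φ, hφ, rfl⟩
    have := hcx h ⟨_, hh_lip⟩ (convexOn_sup'_univ hf_convex)
    linarith
  obtain ⟨φ, ⟨hφ_nonneg, hφ_sum⟩, hφt⟩ := hmem
  refine ⟨fun i ↦ φ i, fun i ↦ (Lp.stronglyMeasurable (φ i)).measurable,
    fun i ↦ hγν.ae_le ((Lp.coeFn_nonneg _).2 (hφ_nonneg i)), hγν.ae_le ?_, fun i ↦ ?_⟩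
  · filter_upwards [Lp.coeFn_finsetSum Finset.univ fun i ↦ φ i,
      Lp.coeFn_const (p := 2) (μ := ν) (c := (1 : ℝ))] with y hsum hconst
    rw [hφ_sum, hconst, Finset.sum_apply] at hsum
    exact hsum.symm
  · rw [← hT, hφt]

theorem exists_measure_decomposition_of_forall_convex_le (γ : Measure B) [IsProbabilityMeasure γ]
    (hγ : Integrable (fun y ↦ y) γ) {n : ℕ} [NeZero n] (x : Fin n → B) (p : Fin n → ℝ)
    (hp : ∀ i, 0 ≤ p i)
    (hcx : ∀ f : B → ℝ, (∃ K, LipschitzWith K f) → ConvexOn ℝ Set.univ f →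
      ∑ i, p i * f (x i) ≤ ∫ y, f y ∂γ) :
    ∃ μ : Fin n → Measure B, Measure.sum μ = γ ∧ (∀ i, μ i Set.univ = ENNReal.ofReal (p i)) ∧
      ∀ i, ∫ y, y ∂μ i = p i • x i := by
  obtain ⟨φ, hφ_meas, hφ_nonneg, hφ_sum, hφ⟩ :=
    exists_densities_of_forall_convex_le γ hγ x p hp hcx
  have hint (i : Fin n) : Integrable (fun y ↦ φ i y • ((1 : ℝ), y)) γ := by
    refine ((integrable_const (1 : ℝ)).prodMk hγ).bdd_smul 1 (hφ_meas i).aestronglyMeasurable ?_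
    filter_upwards [ae_all_iff.2 hφ_nonneg, hφ_sum] with y hy hsum
    rw [Real.norm_of_nonneg (hy i), ← hsum]
    exact Finset.single_le_sum (fun j _ ↦ hy j) (Finset.mem_univ i)
  have hφ_int (i : Fin n) : Integrable (φ i) γ := by simpa using (hint i).fst
  refine ⟨fun i ↦ γ.withDensity fun y ↦ ENNReal.ofReal (φ i y), ?_, fun i ↦ ?_, fun i ↦ ?_⟩
  · rw [← withDensity_tsum fun i ↦ (hφ_meas i).ennreal_ofReal]
    conv_rhs => rw [← withDensity_one (μ := γ)]
    refine withDensity_congr_ae ?_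
    filter_upwards [ae_all_iff.2 hφ_nonneg, hφ_sum] with y hy hsum
    rw [tsum_fintype, Finset.sum_apply, ← ENNReal.ofReal_sum_of_nonneg fun j _ ↦ hy j, hsum]
    simp
  · rw [withDensity_apply _ MeasurableSet.univ, setLIntegral_univ,
      ← ofReal_integral_eq_lintegral_ofReal (hφ_int i) (hφ_nonneg i)]
    congr 1
    have := congrArg Prod.fst (hφ i)
    rw [fst_integral (hint i)] at this
    simpa using this
  · rw [integral_withDensity_eq_integral_toReal_smul (hφ_meas i).ennreal_ofReal (by simp)]
    have := congrArg Prod.snd (hφ i)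
    rw [snd_integral (hint i)] at this
    refine Eq.trans (integral_congr_ae ?_) this
    filter_upwards [hφ_nonneg i] with y hy
    simp only [ENNReal.toReal_ofReal hy, Prod.smul_snd]

theorem exists_barycentric_quantisation_of_convex_order
    (ζ γ : Measure B) [IsProbabilityMeasure ζ] [IsProbabilityMeasure γ]
    (hγ : Integrable (fun y ↦ y) γ)
    (hcx : ∀ f : B → ℝ, (∃ K, LipschitzWith K f) → ConvexOn ℝ Set.univ f →
      ∫ x, f x ∂ζ ≤ ∫ x, f x ∂γ) {s : Finset B} (hs : ζ (↑s)ᶜ = 0) :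
    ∃ π : Measure (B × B), IsProbabilityMeasure π ∧ π.snd = γ ∧
      ∃ n : ℕ, ∃ P : Fin n → Set B, (∀ i, MeasurableSet (P i)) ∧
        Pairwise (Function.onFun Disjoint P) ∧ (⋃ i, P i = Set.univ) ∧
        ∃ y : Fin n → B,
          (∀ i, π (P i ×ˢ Set.univ) ≠ 0 →
            y i = (π (P i ×ˢ Set.univ)).toReal⁻¹ •
              ∫ q in P i ×ˢ (Set.univ : Set B), q.2 ∂π) ∧
          ζ = ∑ i ∈ Finset.univ.filter (fun i => π (P i ×ˢ Set.univ) ≠ 0),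
            π (P i ×ˢ Set.univ) • Measure.dirac (y i) := by
  obtain ⟨x, hx, hζ⟩ := exists_injective_eq_sum_smul_dirac ζ hs
  have hne : NeZero s.card := by
    refine ⟨fun h0 ↦ ?_⟩
    rw [Finset.card_eq_zero.1 h0] at hs
    simp at hs
  have hcx_sum (f : B → ℝ) (hf : ∃ K, LipschitzWith K f) (hf' : ConvexOn ℝ Set.univ f) :
      ∑ i, ζ.real {x i} * f (x i) ≤ ∫ y, f y ∂γ := by
    convert hcx f hf hf' using 1
    conv_rhs => rw [hζ]
    rw [integral_finsetSum_measure fun i _ ↦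
      (integrable_dirac (by simp)).smul_measure (measure_ne_top ζ _)]
    simp [integral_smul_measure, Measure.real]
  obtain ⟨μ, hμγ, hμ_univ, hμ_mean⟩ := exists_measure_decomposition_of_forall_convex_le γ hγ x
    (fun i ↦ ζ.real {x i}) (fun i ↦ measureReal_nonneg) hcx_sum
  have hμ_ζ (i : Fin s.card) : μ i Set.univ = ζ {x i} := by
    rw [hμ_univ, ofReal_measureReal]
  have hμ_fin (i : Fin s.card) : IsFiniteMeasure (μ i) :=
    ⟨by rw [hμ_ζ]; exact measure_lt_top ζ _⟩
  let k : B → Fin s.card := Function.invFun x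
  have hkx (i : Fin s.card) : k (x i) = i := Function.leftInverse_invFun hx i
  have hk : Measurable k := by
    refine (measurable_const (a := Classical.choice ⟨(0 : Fin s.card)⟩)).measurable_of_countable_ne
      ((Set.countable_range x).mono fun b hb ↦ ?_)
    by_contra hnot
    exact hb (Function.invFun_neg hnot).symm
  let P : Fin s.card → Set B := fun i ↦ k ⁻¹' {i}
  have hP (i : Fin s.card) : MeasurableSet (P i) := hk (measurableSet_singleton i)
  let π : Measure (B × B) := Measure.sum fun i ↦ (Measure.dirac (x i)).prod (μ i)
  have hπ_snd : π.snd = γ := by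
    rw [Measure.snd_sum, ← hμγ]
    simp
  have hπ_restrict (i : Fin s.card) :
      π.restrict (P i ×ˢ Set.univ) = (Measure.dirac (x i)).prod (μ i) := by
    classical
    rw [Measure.restrict_sum _ ((hP i).prod MeasurableSet.univ), Measure.sum_fintype,
      Finset.sum_eq_single i _ (by simp)]
    · rw [← Measure.prod_restrict, Measure.restrict_univ, restrict_dirac' (hP i)]
      simp [P, hkx]
    · intro j _ hji
      rw [← Measure.prod_restrict, Measure.restrict_univ, restrict_dirac' (hP i)]
      simp [P, hkx, hji]
  have hπP (i : Fin s.card) : π (P i ×ˢ Set.univ) = ζ {x i} := by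
    rw [← Measure.restrict_apply_univ, hπ_restrict, ← hμ_ζ, ← Set.univ_prod_univ,
      Measure.prod_prod]
    simp
  have hπ_mean (i : Fin s.card) :
      ∫ q in P i ×ˢ (Set.univ : Set B), q.2 ∂π = ζ.real {x i} • x i := by
    rw [hπ_restrict, ← hμ_mean, Measure.dirac_prod,
      integral_map (by fun_prop) (Measurable.aestronglyMeasurable (by fun_prop))]
  refine ⟨π, ⟨by rw [← Measure.snd_univ, hπ_snd, measure_univ]⟩, hπ_snd, s.card, P, hP,
    fun i j hij ↦ (Set.disjoint_singleton.2 hij).preimage k, ?_, x, fun i hi ↦ ?_, ?_⟩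
  · exact Set.eq_univ_of_forall fun b ↦ Set.mem_iUnion.2 ⟨k b, rfl⟩
  · rw [hπ_mean, hπP, Measure.real, inv_smul_smul₀]
    rw [hπP] at hi
    exact ENNReal.toReal_ne_zero.2 ⟨hi, measure_ne_top ζ _⟩
  · simp only [hπP]
    conv_lhs => rw [hζ]
    symm
    refine Finset.sum_filter_of_ne fun i _ hi h0 ↦ hi ?_
    rw [h0, zero_smul]

theorem integral_le_of_barycentric_quantisation
    (γ : Measure B) [IsProbabilityMeasure γ] (hγ : Integrable (fun y ↦ y) γ)
    {π : Measure (B × B)} [IsProbabilityMeasure π] (hπ : π.snd = γ) {n : ℕ} {P : Fin n → Set B}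
    (hP : ∀ i, MeasurableSet (P i)) (hP_disj : Pairwise (Function.onFun Disjoint P))
    (hP_univ : ⋃ i, P i = Set.univ) {y : Fin n → B}
    (hy : ∀ i, π (P i ×ˢ Set.univ) ≠ 0 → y i = (π (P i ×ˢ Set.univ)).toReal⁻¹ •
      ∫ q in P i ×ˢ (Set.univ : Set B), q.2 ∂π)
    {f : B → ℝ} {K : ℝ≥0} (hf : LipschitzWith K f) (hf_convex : ConvexOn ℝ Set.univ f) :
    ∫ x, f x ∂(∑ i ∈ Finset.univ.filter (fun i => π (P i ×ˢ Set.univ) ≠ 0),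
      π (P i ×ˢ Set.univ) • Measure.dirac (y i)) ≤ ∫ x, f x ∂γ := by
  have hsnd : MeasurePreserving Prod.snd π γ := ⟨measurable_snd, hπ⟩
  have hint : Integrable (fun q : B × B ↦ q.2) π := hsnd.integrable_comp_of_integrable hγ
  have hfint : Integrable (fun q : B × B ↦ f q.2) π :=
    hsnd.integrable_comp_of_integrable (hf.integrable_of_integrable_id hγ)
  have hterm (i : Fin n) : (π (P i ×ˢ Set.univ)).toReal * f (y i) ≤
      ∫ q in P i ×ˢ (Set.univ : Set B), f q.2 ∂π := by
    by_cases hi : π (P i ×ˢ Set.univ) = 0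
    · rw [hi, Measure.restrict_eq_zero.2 hi]
      simp
    have hjensen := hf_convex.map_set_average_le hf.continuous.continuousOn isClosed_univ hi
      (measure_ne_top π _) (by simp) hint.integrableOn hfint.integrableOn
    simp only [setAverage_eq, Measure.real, smul_eq_mul] at hjensen
    rw [← hy i hi] at hjensen
    rwa [← le_inv_mul_iff₀ (ENNReal.toReal_pos hi (measure_ne_top π _))]
  calc _ = ∑ i ∈ Finset.univ.filter (fun i => π (P i ×ˢ Set.univ) ≠ 0),
        (π (P i ×ˢ Set.univ)).toReal * f (y i) := by
        rw [integral_finsetSum_measure fun i _ ↦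
          (integrable_dirac (by simp)).smul_measure (measure_ne_top π _)]
        simp [integral_smul_measure]
    _ = ∑ i, (π (P i ×ˢ Set.univ)).toReal * f (y i) :=
        Finset.sum_filter_of_ne fun i _ hi h0 ↦ hi (by rw [h0]; simp)
    _ ≤ ∑ i, ∫ q in P i ×ˢ (Set.univ : Set B), f q.2 ∂π :=
        Finset.sum_le_sum fun i _ ↦ hterm i
    _ = ∫ q, f q.2 ∂π := by
        rw [← integral_iUnion_fintype (fun i ↦ (hP i).prod MeasurableSet.univ)
          (fun i j hij ↦ Set.disjoint_prod.2 (Or.inl (hP_disj hij)))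
          (fun i ↦ hfint.integrableOn), ← Set.iUnion_prod_const, hP_univ, Set.univ_prod_univ,
          setIntegral_univ]
    _ = ∫ x, f x ∂γ := by
        rw [← hπ, Measure.snd, integral_map measurable_snd.aemeasurable
          hf.continuous.aestronglyMeasurable]

end

theorem convex_order_finitely_supported_iff_barycentric_quantisation
    {B : Type*} [NormedAddCommGroup B] [NormedSpace ℝ B] [CompleteSpace B]
    [MeasurableSpace B] [BorelSpace B] [SecondCountableTopology B]
    (ζ γ : Measure B) [IsProbabilityMeasure ζ] [IsProbabilityMeasure γ]
    (hζ1 : Integrable (fun x => x) ζ) (hγ1 : Integrable (fun x => x) γ) :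
    ((∀ f : B → ℝ, (∃ K, LipschitzWith K f) → ConvexOn ℝ Set.univ f →
        ∫ x, f x ∂ζ ≤ ∫ x, f x ∂γ) ∧ ∃ s : Finset B, ζ (↑s)ᶜ = 0) ↔
      ∃ π : Measure (B × B), IsProbabilityMeasure π ∧ π.snd = γ ∧
        ∃ n : ℕ, ∃ P : Fin n → Set B, (∀ i, MeasurableSet (P i)) ∧
          Pairwise (Function.onFun Disjoint P) ∧ (⋃ i, P i = Set.univ) ∧
          ∃ y : Fin n → B,
            (∀ i, π (P i ×ˢ Set.univ) ≠ 0 →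
              y i = (π (P i ×ˢ Set.univ)).toReal⁻¹ •
                ∫ q in P i ×ˢ (Set.univ : Set B), q.2 ∂π) ∧
            ζ = ∑ i ∈ Finset.univ.filter (fun i => π (P i ×ˢ Set.univ) ≠ 0),
              π (P i ×ˢ Set.univ) • Measure.dirac (y i) := by
  classical
  constructor
  · rintro ⟨hcx, s, hs⟩
    exact exists_barycentric_quantisation_of_convex_order ζ γ hγ1 hcx hs
  · rintro ⟨π, hπ_prob, hπ, n, P, hP, hP_disj, hP_univ, y, hy, hζ⟩
    refine ⟨fun f ⟨K, hf⟩ hf_convex ↦ ?_, Finset.univ.image y, ?_⟩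
    · rw [hζ]
      exact integral_le_of_barycentric_quantisation γ hγ1 hπ hP hP_disj hP_univ hy hf hf_convex
    · rw [hζ, Measure.finsetSum_apply]
      refine Finset.sum_eq_zero fun i _ ↦ ?_
      rw [Measure.smul_apply, Measure.dirac_apply' _ (Finset.measurableSet _).compl]
      simp
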